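/- Let R₃(n) denote the number of 2-colored Rogers-Ramanujan partitions of n in which the part 1 never occurs in the red color. Then ∑_{n≥0} R₃(n) q^n = (-q;q)_∞ (q; q^4)_∞ (q^3; q^4)_∞ (q^4; q^4)_∞ / (q;q)_∞. -/

import Mathlib

/-- A valid single-color part set of a 2-colored Rogers-Ramanujan partition:
all parts positive and any two distinct parts differ by at least 2. -/
def IsRRColor (A : Finset ℕ) : Prop :=
  (∀ a ∈ A, 1 ≤ a) ∧ ∀ a ∈ A, ∀ b ∈ A, a ≠ b → 2 ≤ max a b - min a b

/-- A 2-colored Rogers-Ramanujan partition: a pair of part sets (black, red),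
each a valid color class, with no common part. -/
def TwoColoredRR (p : Finset ℕ × Finset ℕ) : Prop :=
  IsRRColor p.1 ∧ IsRRColor p.2 ∧ Disjoint p.1 p.2

/-- Infinite q-Pochhammer symbol `(a;q)_∞ = ∏_{i≥0} (1 - a qⁱ)`. -/
noncomputable def qPochInf (a q : ℂ) : ℂ := ∏' i : ℕ, (1 - a * q ^ i)

/-- Finite q-Pochhammer symbol `(a;q)_n = ∏_{i=0}^{n-1} (1 - a qⁱ)`. -/
noncomputable def qPoch (a q : ℂ) (n : ℕ) : ℂ := ∏ i ∈ Finset.range n, (1 - a * q ^ i)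

/-- `R₃ n`: the number of 2-colored Rogers-Ramanujan partitions of `n` (black parts
`p.1`, red parts `p.2`) in which the part `1` never occurs in the red color. -/
noncomputable def R3count (n : ℕ) : ℕ :=
  Nat.card {p : Finset ℕ × Finset ℕ // TwoColoredRR p ∧ 1 ∉ p.2 ∧
    p.1.sum id + p.2.sum id = n}

/-!
Let `g n` be the generating function of the 2-colored Rogers-Ramanujan partitions with all parts
greater than `n` and `n + 1` not red. Deciding which color, if any, the part `n + 1` has gives
`g n = (1 + q ^ (n + 1)) * g (n + 1) + q ^ (n + 2) * g (n + 2)`, and `g n → 1`; these two properties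
determine `g`. The two-variable Lebesgue series
`L(x, z) = ∑ xⁿ q ^ (n (n + 1) / 2) (-zq;q)_n / (q;q)_n` provides a solution: by a contiguous
relation, `n ↦ L(qⁿ, 1)` obeys the same recurrence. Hence `g 0 = L(1, 1)`, which Lebesgue's identity
evaluates: contiguous relations give `L(1, z) = (1 + z q²) L(1, z q²)`, so iterating in `z` reduces
`L(1, z)` to `L(1, 0)`, and iterating in `x` reduces `L(1, 0)` to `L(0, 0) = 1`.
-/

open Filter Topology Finset

section LinearRecurrences

theorem eq_tprod_mul_of_forall_eq_mul_succ {M : Type*} [CommMonoid M] [TopologicalSpace M]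
    [ContinuousMul M] [T2Space M] {f a : ℕ → M} {L : M} (hf : ∀ n, f n = a n * f (n + 1))
    (ha : Multipliable a) (hL : Tendsto f atTop (𝓝 L)) : f 0 = (∏' n, a n) * L := by
  have partial_eq (n : ℕ) : f 0 = (∏ i ∈ range n, a i) * f n := by
    induction n with
    | zero => simp
    | succ n ih => rw [ih, prod_range_succ, hf n, mul_assoc]
  exact tendsto_nhds_unique (tendsto_const_nhds.congr partial_eq)
    (ha.tendsto_prod_tprod_nat.mul hL)

theorem nonpos_of_forall_le_one_add_mul_succ {f ε : ℕ → ℝ} (hε : ∀ n, 0 ≤ ε n)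
    (hsum : Summable ε) (hf : ∀ n, f n ≤ (1 + ε n) * f (n + 1)) (hlim : Tendsto f atTop (𝓝 0))
    (n : ℕ) : f n ≤ 0 := by
  have partial_le (m : ℕ) : f n ≤ (∏ i ∈ range m, (1 + ε (i + n))) * f (m + n) := by
    induction m with
    | zero => simp
    | succ m ih =>
      calc f n ≤ (∏ i ∈ range m, (1 + ε (i + n))) * f (m + n) := ih
        _ ≤ (∏ i ∈ range m, (1 + ε (i + n))) * ((1 + ε (m + n)) * f (m + n + 1)) :=
          mul_le_mul_of_nonneg_left (hf _) (prod_nonneg fun i _ => by linarith [hε (i + n)])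
        _ = (∏ i ∈ range (m + 1), (1 + ε (i + n))) * f (m + 1 + n) := by
          rw [prod_range_succ, mul_assoc, Nat.add_right_comm]
  have hmul : Multipliable fun i => 1 + ε (i + n) :=
    Real.multipliable_one_add_of_summable ((summable_nat_add_iff n).2 hsum)
  simpa using ge_of_tendsto'
    (hmul.tendsto_prod_tprod_nat.mul (hlim.comp (tendsto_add_atTop_nat n))) partial_le

theorem eq_zero_of_tendsto_zero_of_recurrence {R : Type*} [NormedRing R] [NormOneClass R]
    {u a b : ℕ → R} (hu : ∀ n, u n = (1 + a n) * u (n + 1) + b n * u (n + 2))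
    (ha : Summable fun n => ‖a n‖) (hb : Summable fun n => ‖b n‖)
    (hlim : Tendsto u atTop (𝓝 0)) (n : ℕ) : u n = 0 := by
  have hstep (n : ℕ) : max ‖u n‖ ‖u (n + 1)‖ ≤
      (1 + (‖a n‖ + ‖b n‖)) * max ‖u (n + 1)‖ ‖u (n + 2)‖ := by
    have hM : 0 ≤ max ‖u (n + 1)‖ ‖u (n + 2)‖ := le_max_of_le_left (norm_nonneg _)
    refine max_le ?_ ?_
    · calc ‖u n‖ ≤ ‖1 + a n‖ * ‖u (n + 1)‖ + ‖b n‖ * ‖u (n + 2)‖ := by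
            rw [hu n]
            exact (norm_add_le _ _).trans (add_le_add (norm_mul_le _ _) (norm_mul_le _ _))
        _ ≤ (1 + ‖a n‖) * max ‖u (n + 1)‖ ‖u (n + 2)‖ +
            ‖b n‖ * max ‖u (n + 1)‖ ‖u (n + 2)‖ := by
          gcongr
          · simpa using norm_add_le 1 (a n)
          · exact le_max_left _ _
          · exact le_max_right _ _
        _ = _ := by ring
    · exact (le_max_left _ _).trans
        (le_mul_of_one_le_left hM (le_add_of_nonneg_right (by positivity)))
  have hmax : Tendsto (fun n => max ‖u n‖ ‖u (n + 1)‖) atTop (𝓝 0) := by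
    simpa using hlim.norm.max (hlim.norm.comp (tendsto_add_atTop_nat 1))
  have := nonpos_of_forall_le_one_add_mul_succ (fun n => by positivity) (ha.add hb) hstep hmax n
  exact norm_le_zero_iff.1 ((le_max_left _ _).trans this)

end LinearRecurrences

section QPochhammer

section NormedField

variable {𝕜 : Type*} [NormedField 𝕜] {q : 𝕜}

theorem norm_pow_lt_one_of_ne_zero (hq : ‖q‖ < 1) {n : ℕ} (hn : n ≠ 0) : ‖q ^ n‖ < 1 := by
  simpa only [norm_pow] using pow_lt_one₀ (norm_nonneg q) hq hn

theorem one_sub_pow_ne_zero (hq : ‖q‖ < 1) {n : ℕ} (hn : n ≠ 0) : 1 - q ^ n ≠ 0 := by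
  intro h
  simpa [← sub_eq_zero.1 h] using norm_pow_lt_one_of_ne_zero hq hn

theorem summable_norm_neg_mul_geometric (a : 𝕜) (hq : ‖q‖ < 1) :
    Summable fun i : ℕ => ‖-(a * q ^ i)‖ := by
  simpa only [norm_neg, norm_mul, norm_pow] using
    (summable_geometric_of_lt_one (norm_nonneg q) hq).mul_left ‖a‖

end NormedField

variable {q : ℂ}

theorem multipliable_qPochInf (a : ℂ) (hq : ‖q‖ < 1) :
    Multipliable fun i : ℕ => 1 - a * q ^ i := by
  simpa only [sub_eq_add_neg] using
    multipliable_one_add_of_summable (summable_norm_neg_mul_geometric a hq)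

theorem qPochInf_ne_zero {a : ℂ} (hq : ‖q‖ < 1) (ha : ∀ i : ℕ, 1 - a * q ^ i ≠ 0) :
    qPochInf a q ≠ 0 := by
  simpa only [qPochInf, sub_eq_add_neg] using tprod_one_add_ne_zero_of_summable
    (by simpa only [sub_eq_add_neg] using ha) (summable_norm_neg_mul_geometric a hq)

theorem qPochInf_self_ne_zero (hq : ‖q‖ < 1) : qPochInf q q ≠ 0 :=
  qPochInf_ne_zero hq fun i => by simpa only [pow_succ'] using one_sub_pow_ne_zero hq i.succ_ne_zero

theorem qPochInf_sq_mul_qPochInf_sq (a : ℂ) (hq : ‖q‖ < 1) :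
    qPochInf a (q ^ 2) * qPochInf (a * q) (q ^ 2) = qPochInf a q := by
  have hq2 := norm_pow_lt_one_of_ne_zero hq two_ne_zero
  have even_factor (k : ℕ) : 1 - a * q ^ (2 * k) = 1 - a * (q ^ 2) ^ k := by ring
  have odd_factor (k : ℕ) : 1 - a * q ^ (2 * k + 1) = 1 - a * q * (q ^ 2) ^ k := by ring
  have := tprod_even_mul_odd (f := fun k => 1 - a * q ^ k)
    (by simpa only [even_factor] using multipliable_qPochInf a hq2)
    (by simpa only [odd_factor] using multipliable_qPochInf (a * q) hq2)
  simpa only [qPochInf, even_factor, odd_factor] using this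

theorem qPochInf_mul_qPochInf_neg (a : ℂ) (hq : ‖q‖ < 1) :
    qPochInf a q * qPochInf (-a) q = qPochInf (a ^ 2) (q ^ 2) := by
  rw [qPochInf, qPochInf, qPochInf,
    ← (multipliable_qPochInf a hq).tprod_mul (multipliable_qPochInf (-a) hq)]
  exact tprod_congr fun k => by ring

theorem qPochInf_mul_qPochInf_mul_qPochInf_four (hq : ‖q‖ < 1) :
    qPochInf q (q ^ 4) * qPochInf (q ^ 3) (q ^ 4) * qPochInf (q ^ 4) (q ^ 4) =
      qPochInf q q * qPochInf (-(q ^ 2)) (q ^ 2) := by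
  have hq2 := norm_pow_lt_one_of_ne_zero hq two_ne_zero
  calc qPochInf q (q ^ 4) * qPochInf (q ^ 3) (q ^ 4) * qPochInf (q ^ 4) (q ^ 4)
      = qPochInf q (q ^ 2) * qPochInf (q ^ 4) (q ^ 4) := by
        rw [← qPochInf_sq_mul_qPochInf_sq q hq2]
        ring_nf
    _ = qPochInf q (q ^ 2) * (qPochInf (q ^ 2) (q ^ 2) * qPochInf (-(q ^ 2)) (q ^ 2)) := by
        rw [qPochInf_mul_qPochInf_neg _ hq2]
        ring_nf
    _ = qPochInf q q * qPochInf (-(q ^ 2)) (q ^ 2) := by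
        rw [← qPochInf_sq_mul_qPochInf_sq q hq, ← sq q, mul_assoc]

end QPochhammer

section LebesgueSeries

/-- The term `xⁿ q ^ (n (n + 1) / 2) (-zq;q)_n / (q;q)_n` of the two-variable Lebesgue series,
written as a product over `n` factors. -/
def qLebesgueTerm {𝕜 : Type*} [Field 𝕜] (q x z : 𝕜) (n : ℕ) : 𝕜 :=
  ∏ i ∈ range n, x * q ^ (i + 1) * (1 + z * q ^ (i + 1)) / (1 - q ^ (i + 1))

/-- The two-variable Lebesgue series `L(x, z) = ∑ xⁿ q ^ (n (n + 1) / 2) (-zq;q)_n / (q;q)_n`, whose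
case `x = 1` is the left-hand side of Lebesgue's identity. -/
noncomputable def qLebesgueSeries {𝕜 : Type*} [NormedField 𝕜] (q x z : 𝕜) : 𝕜 :=
  ∑' n, qLebesgueTerm q x z n

section Field

variable {𝕜 : Type*} [Field 𝕜] (q x z : 𝕜)

@[simp]
theorem qLebesgueTerm_zero : qLebesgueTerm q x z 0 = 1 := by simp [qLebesgueTerm]

theorem qLebesgueTerm_succ (n : ℕ) : qLebesgueTerm q x z (n + 1) =
    x * q ^ (n + 1) * (1 + z * q ^ (n + 1)) / (1 - q ^ (n + 1)) * qLebesgueTerm q x z n := by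
  rw [qLebesgueTerm, prod_range_succ, mul_comm, qLebesgueTerm]

theorem qLebesgueTerm_mul_left (y : 𝕜) (n : ℕ) :
    qLebesgueTerm q (x * y) z n = y ^ n * qLebesgueTerm q x z n := by
  induction n with
  | zero => simp
  | succ n ih =>
    rw [qLebesgueTerm_succ, qLebesgueTerm_succ, ih]
    ring

theorem one_add_mul_qLebesgueTerm_mul_right (n : ℕ) :
    (1 + z * q) * qLebesgueTerm q x (z * q) n =
      (1 + z * q ^ (n + 1)) * qLebesgueTerm q x z n := by
  induction n with
  | zero => simp
  | succ n ih =>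
    rw [qLebesgueTerm_succ, qLebesgueTerm_succ, mul_left_comm, ih]
    ring

end Field

section NormedField

variable {𝕜 : Type*} [NormedField 𝕜] {q : 𝕜}

theorem qLebesgueTerm_succ_mul_one_sub (hq : ‖q‖ < 1) (x z : 𝕜) (n : ℕ) :
    qLebesgueTerm q x z (n + 1) * (1 - q ^ (n + 1)) =
      x * q ^ (n + 1) * (1 + z * q ^ (n + 1)) * qLebesgueTerm q x z n := by
  rw [qLebesgueTerm_succ, div_mul_eq_mul_div,
    div_mul_cancel₀ _ (one_sub_pow_ne_zero hq n.add_one_ne_zero)]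

theorem norm_qLebesgueTerm_le (hq : ‖q‖ < 1) {x z : 𝕜} {X Z : ℝ} (hx : ‖x‖ ≤ X) (hz : ‖z‖ ≤ Z)
    (n : ℕ) : ‖qLebesgueTerm q x z n‖ ≤ qLebesgueTerm ‖q‖ X Z n := by
  rw [qLebesgueTerm, norm_prod]
  refine prod_le_prod (fun _ _ => norm_nonneg _) fun i _ => ?_
  have hpos : 0 < 1 - ‖q‖ ^ (i + 1) :=
    sub_pos.2 (pow_lt_one₀ (norm_nonneg q) hq i.add_one_ne_zero)
  have hden : 1 - ‖q‖ ^ (i + 1) ≤ ‖1 - q ^ (i + 1)‖ := by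
    simpa using norm_sub_norm_le 1 (q ^ (i + 1))
  have hnum : ‖1 + z * q ^ (i + 1)‖ ≤ 1 + Z * ‖q‖ ^ (i + 1) := by
    refine (norm_add_le _ _).trans ?_
    rw [norm_one, norm_mul, norm_pow]
    gcongr
  have hX : 0 ≤ X := (norm_nonneg x).trans hx
  have hZ : 0 ≤ Z := (norm_nonneg z).trans hz
  rw [norm_div, norm_mul, norm_mul, norm_pow]
  gcongr

theorem qLebesgueSeries_zero_left (q z : 𝕜) : qLebesgueSeries q 0 z = 1 := by
  rw [qLebesgueSeries, tsum_eq_single 0 fun n hn => ?_, qLebesgueTerm_zero]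
  simpa [hn] using qLebesgueTerm_mul_left q 0 z 0 n

variable [CompleteSpace 𝕜]

theorem summable_qLebesgueTerm (hq : ‖q‖ < 1) (x z : 𝕜) : Summable (qLebesgueTerm q x z) := by
  have hpow : Tendsto (fun n : ℕ => q ^ (n + 1)) atTop (𝓝 0) :=
    (tendsto_pow_atTop_nhds_zero_of_norm_lt_one hq).comp (tendsto_add_atTop_nat 1)
  have hratio : Tendsto (fun n : ℕ => ‖x * q ^ (n + 1) * (1 + z * q ^ (n + 1)) /
      (1 - q ^ (n + 1))‖) atTop (𝓝 0) := by
    simpa using (((hpow.const_mul x).mul ((hpow.const_mul z).const_add 1)).div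
      (hpow.const_sub 1) (by simp)).norm
  refine summable_of_ratio_norm_eventually_le one_half_lt_one ?_
  filter_upwards [hratio.eventually_le_const one_half_pos] with n hn
  rw [qLebesgueTerm_succ, norm_mul]
  gcongr

theorem tendsto_qLebesgueSeries (hq : ‖q‖ < 1) {ι : Type*} {l : Filter ι} {f g : ι → 𝕜} {x z : 𝕜}
    (hf : Tendsto f l (𝓝 x)) (hg : Tendsto g l (𝓝 z)) :
    Tendsto (fun i => qLebesgueSeries q (f i) (g i)) l (𝓝 (qLebesgueSeries q x z)) := by
  refine tendsto_tsum_of_dominated_convergence (bound := qLebesgueTerm ‖q‖ (‖x‖ + 1) (‖z‖ + 1))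
    (summable_qLebesgueTerm (by simpa using hq) _ _) (fun n => ?_) ?_
  · exact tendsto_finsetProd _ fun i _ =>
      ((hf.mul_const _).mul ((hg.mul_const _).const_add 1)).div_const _
  · filter_upwards [hf.norm.eventually_le_const (lt_add_one ‖x‖),
      hg.norm.eventually_le_const (lt_add_one ‖z‖)] with i hfi hgi
    exact norm_qLebesgueTerm_le hq hfi hgi

theorem one_add_mul_qLebesgueSeries_mul_right (hq : ‖q‖ < 1) (x z : 𝕜) :
    (1 + z * q) * qLebesgueSeries q x (z * q) =
      qLebesgueSeries q x z + z * q * qLebesgueSeries q (x * q) z := by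
  have hterm (n : ℕ) : (1 + z * q) * qLebesgueTerm q x (z * q) n =
      qLebesgueTerm q x z n + z * q * qLebesgueTerm q (x * q) z n := by
    rw [one_add_mul_qLebesgueTerm_mul_right, qLebesgueTerm_mul_left]
    ring
  simp only [qLebesgueSeries, ← tsum_mul_left, hterm]
  exact (summable_qLebesgueTerm hq x z).tsum_add
    ((summable_qLebesgueTerm hq (x * q) z).mul_left _)

theorem qLebesgueSeries_sub_mul_left (hq : ‖q‖ < 1) (x z : 𝕜) :
    qLebesgueSeries q x z - qLebesgueSeries q (x * q) z =
      x * q * qLebesgueSeries q (x * q) z + x * z * q ^ 2 * qLebesgueSeries q (x * q ^ 2) z := by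
  have hterm (n : ℕ) : qLebesgueTerm q x z (n + 1) - qLebesgueTerm q (x * q) z (n + 1) =
      x * q * qLebesgueTerm q (x * q) z n + x * z * q ^ 2 * qLebesgueTerm q (x * q ^ 2) z n := by
    simp only [qLebesgueTerm_mul_left]
    linear_combination qLebesgueTerm_succ_mul_one_sub hq x z n
  have hsum (y : 𝕜) := summable_qLebesgueTerm hq y z
  simp only [qLebesgueSeries, ← tsum_mul_left]
  rw [← (hsum x).tsum_sub (hsum _), ((hsum x).sub (hsum _)).tsum_eq_zero_add,
    ← ((hsum _).mul_left _).tsum_add ((hsum _).mul_left _)]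
  simp [hterm]

theorem qLebesgueSeries_sub_mul_right (hq : ‖q‖ < 1) (x z : 𝕜) :
    qLebesgueSeries q x z - qLebesgueSeries q x (z * q) =
      x * z * q ^ 2 * qLebesgueSeries q (x * q) (z * q) := by
  have hterm (n : ℕ) : qLebesgueTerm q x z (n + 1) - qLebesgueTerm q x (z * q) (n + 1) =
      x * z * q ^ 2 * qLebesgueTerm q (x * q) (z * q) n := by
    refine mul_right_cancel₀ (one_sub_pow_ne_zero hq n.add_one_ne_zero) ?_
    rw [sub_mul, qLebesgueTerm_succ_mul_one_sub hq, qLebesgueTerm_succ_mul_one_sub hq,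
      qLebesgueTerm_mul_left]
    linear_combination -x * q ^ (n + 1) * one_add_mul_qLebesgueTerm_mul_right q x z n
  have hsum (y : 𝕜) := summable_qLebesgueTerm hq x y
  rw [qLebesgueSeries, qLebesgueSeries, ← (hsum z).tsum_sub (hsum _),
    ((hsum z).sub (hsum _)).tsum_eq_zero_add, qLebesgueSeries, ← tsum_mul_left]
  simp [hterm]

theorem qLebesgueSeries_one_left_eq_mul (hq : ‖q‖ < 1) (z : 𝕜) :
    qLebesgueSeries q 1 z = (1 + z * q ^ 2) * qLebesgueSeries q 1 (z * q ^ 2) := by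
  have hadd := one_add_mul_qLebesgueSeries_mul_right hq 1 (z * q)
  have hsub := qLebesgueSeries_sub_mul_right hq 1 z
  rw [mul_assoc z q q, ← sq] at hadd
  linear_combination hsub - hadd

end NormedField

variable {q : ℂ}

/-- Euler's identity. -/
theorem qLebesgueSeries_zero_right (hq : ‖q‖ < 1) (x : ℂ) :
    qLebesgueSeries q x 0 = qPochInf (-(x * q)) q := by
  have hlim : Tendsto (fun n : ℕ => qLebesgueSeries q (x * q ^ n) 0) atTop (𝓝 1) := by
    have hpow := (tendsto_pow_atTop_nhds_zero_of_norm_lt_one hq).const_mul x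
    simpa [qLebesgueSeries_zero_left] using tendsto_qLebesgueSeries hq hpow tendsto_const_nhds
  have hrec (n : ℕ) : qLebesgueSeries q (x * q ^ n) 0 =
      (1 - -(x * q) * q ^ n) * qLebesgueSeries q (x * q ^ (n + 1)) 0 := by
    rw [pow_succ, ← mul_assoc]
    linear_combination qLebesgueSeries_sub_mul_left hq (x * q ^ n) 0
  simpa [qPochInf] using
    eq_tprod_mul_of_forall_eq_mul_succ hrec (multipliable_qPochInf _ hq) hlim

/-- Lebesgue's identity. -/
theorem qLebesgueSeries_one_left (hq : ‖q‖ < 1) (z : ℂ) :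
    qLebesgueSeries q 1 z = qPochInf (-(z * q ^ 2)) (q ^ 2) * qPochInf (-q) q := by
  have hq2 := norm_pow_lt_one_of_ne_zero hq two_ne_zero
  have hlim : Tendsto (fun n : ℕ => qLebesgueSeries q 1 (z * (q ^ 2) ^ n)) atTop
      (𝓝 (qPochInf (-q) q)) := by
    have hpow := (tendsto_pow_atTop_nhds_zero_of_norm_lt_one hq2).const_mul z
    simpa [qLebesgueSeries_zero_right hq] using
      tendsto_qLebesgueSeries hq (tendsto_const_nhds (x := 1)) hpow
  have hrec (n : ℕ) : qLebesgueSeries q 1 (z * (q ^ 2) ^ n) =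
      (1 - -(z * q ^ 2) * (q ^ 2) ^ n) * qLebesgueSeries q 1 (z * (q ^ 2) ^ (n + 1)) := by
    rw [qLebesgueSeries_one_left_eq_mul hq, pow_succ (q ^ 2), ← mul_assoc]
    ring
  simpa [qPochInf] using
    eq_tprod_mul_of_forall_eq_mul_succ hrec (multipliable_qPochInf _ hq2) hlim

end LebesgueSeries

theorem isRRColor_iff {A : Finset ℕ} : IsRRColor A ↔ 0 ∉ A ∧ ∀ a ∈ A, a + 1 ∉ A := by
  constructor
  · rintro ⟨hpos, hdiff⟩
    refine ⟨fun h0 => by simpa using hpos 0 h0, fun a ha hsucc => ?_⟩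
    have := hdiff a ha (a + 1) hsucc (by omega)
    omega
  · rintro ⟨hzero, hsucc⟩
    refine ⟨fun a ha => Nat.one_le_iff_ne_zero.2 fun h => hzero (h ▸ ha), fun a ha b hb hab => ?_⟩
    have ha_ne : b ≠ a + 1 := fun h => hsucc a ha (h ▸ hb)
    have hb_ne : a ≠ b + 1 := fun h => hsucc b hb (h ▸ ha)
    omega

theorem isRRColor_insert_succ {n : ℕ} {A : Finset ℕ} (hA : ∀ a ∈ A, n + 1 < a) :
    IsRRColor (insert (n + 1) A) ↔ IsRRColor A ∧ n + 2 ∉ A := by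
  simp only [isRRColor_iff, mem_insert]
  grind

theorem tsum_card_fiber_mul_pow {𝕜 X : Type*} [NormedField 𝕜] [CompleteSpace 𝕜] {q : 𝕜}
    {v : X → ℕ} (hsum : Summable fun x => q ^ v x) :
    ∑' n : ℕ, (Nat.card {x // v x = n} : 𝕜) * q ^ n = ∑' x, q ^ v x := by
  rw [← (hsum.hasSum.tsum_fiberwise v).tsum_eq]
  refine tsum_congr fun n => ?_
  have hfiber (x : v ⁻¹' {n}) : q ^ v x = q ^ n := congrArg (q ^ ·) x.2
  rw [tsum_congr hfiber, tsum_const, nsmul_eq_mul]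
  rfl

namespace TwoColoredRR

section Size

/-- The sum of all parts, of either color, of a pair of part sets. -/
def size (p : Finset ℕ × Finset ℕ) : ℕ := p.1.sum id + p.2.sum id

/-- The pair of part sets `p` with the red part `n` added. -/
def insertRed (n : ℕ) (p : Finset ℕ × Finset ℕ) : Finset ℕ × Finset ℕ := (p.1, insert n p.2)

@[simp]
theorem size_swap (p : Finset ℕ × Finset ℕ) : size p.swap = size p := add_comm _ _

theorem size_insertRed {n : ℕ} {p : Finset ℕ × Finset ℕ} (hp : n ∉ p.2) :
    size (insertRed n p) = n + size p := by
  simp only [size, insertRed, sum_insert hp, id]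
  omega

theorem injOn_insertRed (n : ℕ) : Set.InjOn (insertRed n) {p | n ∉ p.2} := by
  rintro ⟨A, B⟩ (hB : n ∉ B) ⟨A', B'⟩ (hB' : n ∉ B') h
  simp only [insertRed, Prod.mk.injEq] at h
  exact Prod.ext h.1 (by rw [← erase_insert hB, h.2, erase_insert hB'])

end Size

section GenFun

variable {𝕜 : Type*} [NormedField 𝕜] {q : 𝕜}

/-- The generating function `∑ q ^ size p` of a set of pairs of part sets. -/
noncomputable def genFun (q : 𝕜) (S : Set (Finset ℕ × Finset ℕ)) : 𝕜 := ∑' p : S, q ^ size p.1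

theorem genFun_singleton_empty (q : 𝕜) : genFun q {(∅, ∅)} = 1 := by
  simp [genFun, size]

theorem genFun_image_swap (q : 𝕜) (S : Set (Finset ℕ × Finset ℕ)) :
    genFun q (Prod.swap '' S) = genFun q S := by
  rw [genFun, tsum_image (fun p => q ^ size p) Prod.swap_injective.injOn]
  simp [genFun]

theorem genFun_image_insertRed (q : 𝕜) {n : ℕ} {S : Set (Finset ℕ × Finset ℕ)}
    (hS : ∀ p ∈ S, n ∉ p.2) : genFun q (insertRed n '' S) = q ^ n * genFun q S := by
  rw [genFun, tsum_image (fun p => q ^ size p) ((injOn_insertRed n).mono hS), genFun,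
    ← tsum_mul_left]
  exact tsum_congr fun p => by rw [size_insertRed (hS p p.2), pow_add]

theorem summable_norm_pow_size (hq : ‖q‖ < 1) : Summable fun p => ‖q ^ size p‖ := by
  have hsingle : Summable fun A : Finset ℕ => ∏ a ∈ A, ‖q‖ ^ a :=
    summable_finsetProd_of_summable_nonneg (fun a => by positivity)
      (summable_geometric_of_lt_one (norm_nonneg q) hq)
  have hnonneg (A : Finset ℕ) : 0 ≤ ∏ a ∈ A, ‖q‖ ^ a := prod_nonneg fun _ _ => by positivity
  refine (hsingle.mul_of_nonneg hsingle hnonneg hnonneg).congr fun p => ?_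
  rw [prod_pow_eq_pow_sum, prod_pow_eq_pow_sum, size, norm_pow, pow_add]
  rfl

variable [CompleteSpace 𝕜]

theorem genFun_union (hq : ‖q‖ < 1) {S T : Set (Finset ℕ × Finset ℕ)} (hST : Disjoint S T) :
    genFun q (S ∪ T) = genFun q S + genFun q T :=
  have hsum := (summable_norm_pow_size hq).of_norm
  Summable.tsum_union_disjoint hST (hsum.subtype S) (hsum.subtype T)

theorem tendsto_genFun_iInter (hq : ‖q‖ < 1) {S : ℕ → Set (Finset ℕ × Finset ℕ)}
    (hS : Antitone S) : Tendsto (fun n => genFun q (S n)) atTop (𝓝 (genFun q (⋂ n, S n))) := by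
  simp only [genFun, _root_.tsum_subtype _ fun p => q ^ size p]
  exact tendsto_tsum_of_dominated_convergence (summable_norm_pow_size hq)
    (fun p => (hS.tendsto_indicator _ _ p).mono_right (pure_le_nhds _))
    (Eventually.of_forall fun n p => norm_indicator_le_norm_self (fun p => q ^ size p) p)

theorem tsum_card_size_eq_mul_pow (hq : ‖q‖ < 1) (S : Set (Finset ℕ × Finset ℕ)) :
    ∑' n : ℕ, (Nat.card {p : S // size p.1 = n} : 𝕜) * q ^ n = genFun q S :=
  tsum_card_fiber_mul_pow ((summable_norm_pow_size hq).of_norm.subtype S)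

end GenFun

section PartsGT

/-- The 2-colored Rogers-Ramanujan partitions all of whose parts exceed `n`. -/
def partsGT (n : ℕ) : Set (Finset ℕ × Finset ℕ) :=
  {p | TwoColoredRR p ∧ (∀ a ∈ p.1, n < a) ∧ ∀ a ∈ p.2, n < a}

/-- The 2-colored Rogers-Ramanujan partitions all of whose parts exceed `n` and in which the
smallest part still allowed, `n + 1`, is not red; `R3count` counts those with `n = 0`. -/
def partsGTNotRed (n : ℕ) : Set (Finset ℕ × Finset ℕ) := {p ∈ partsGT n | n + 1 ∉ p.2}

theorem mem_partsGT_succ_iff {n : ℕ} {p : Finset ℕ × Finset ℕ} :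
    p ∈ partsGT (n + 1) ↔ p ∈ partsGT n ∧ n + 1 ∉ p.1 ∧ n + 1 ∉ p.2 := by
  simp only [partsGT, Set.mem_ofPred_eq]
  grind

theorem antitone_partsGTNotRed : Antitone partsGTNotRed :=
  antitone_nat_of_succ_le fun _ _ hp =>
    have h := mem_partsGT_succ_iff.1 hp.1
    ⟨h.1, h.2.2⟩

theorem iInter_partsGTNotRed : ⋂ n, partsGTNotRed n = {(∅, ∅)} := by
  ext ⟨A, B⟩
  simp only [Set.mem_iInter, Set.mem_singleton_iff, Prod.mk.injEq]
  constructor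
  · intro h
    exact ⟨eq_empty_of_forall_notMem fun a ha => lt_irrefl a ((h a).1.2.1 a ha),
      eq_empty_of_forall_notMem fun b hb => lt_irrefl b ((h b).1.2.2 b hb)⟩
  · rintro ⟨rfl, rfl⟩
    simp [partsGTNotRed, partsGT, TwoColoredRR, IsRRColor]

theorem setOf_mem_red_eq_image_insertRed (n : ℕ) :
    {p ∈ partsGT n | n + 1 ∈ p.2} = insertRed (n + 1) '' partsGTNotRed (n + 1) := by
  ext ⟨A, B⟩
  constructor
  · rintro ⟨⟨⟨hA, hB, hAB⟩, hAn, hBn⟩, hmem⟩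
    have hnA : n + 1 ∉ A := fun h => disjoint_left.1 hAB h hmem
    have hins : insert (n + 1) (B.erase (n + 1)) = B := insert_erase hmem
    have herase : ∀ b ∈ B.erase (n + 1), n + 1 < b := by grind
    rw [← hins, isRRColor_insert_succ herase] at hB
    exact ⟨(A, B.erase (n + 1)), ⟨⟨⟨hA, hB.1, hAB.mono_right (erase_subset _ _)⟩, by grind, herase⟩,
      hB.2⟩, Prod.ext rfl hins⟩
  · rintro ⟨⟨A', B'⟩, ⟨⟨⟨hA, hB, hAB⟩, hAn, hBn⟩, hnot⟩, h⟩
    obtain ⟨rfl, rfl⟩ := Prod.mk.inj h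
    refine ⟨⟨⟨hA, (isRRColor_insert_succ hBn).2 ⟨hB, hnot⟩, ?_⟩, ?_, ?_⟩, mem_insert_self _ _⟩
    · exact disjoint_insert_right.2 ⟨fun h => lt_irrefl _ (hAn _ h), hAB⟩
    all_goals grind

theorem image_swap_partsGTNotRed (n : ℕ) :
    Prod.swap '' partsGTNotRed n = {p ∈ partsGT n | n + 1 ∉ p.1} := by
  rw [Set.image_swap_eq_preimage_swap]
  ext p
  simp only [partsGTNotRed, partsGT, TwoColoredRR, Set.mem_preimage, Set.mem_ofPred_eq,
    Prod.fst_swap, Prod.snd_swap, disjoint_comm (a := p.2)]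
  tauto

theorem partsGT_eq_union (n : ℕ) :
    partsGT n = partsGTNotRed n ∪ {p ∈ partsGT n | n + 1 ∈ p.2} := by
  ext p
  simp only [partsGTNotRed, Set.mem_union, Set.mem_ofPred_eq]
  tauto

theorem image_swap_partsGTNotRed_eq_union (n : ℕ) :
    Prod.swap '' partsGTNotRed n = partsGT (n + 1) ∪ {p ∈ partsGT n | n + 1 ∈ p.2} := by
  have hdisj {p} (hp : p ∈ partsGT n) : n + 1 ∈ p.2 → n + 1 ∉ p.1 :=
    fun h₂ h₁ => disjoint_left.1 hp.1.2.2 h₁ h₂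
  ext p
  simp only [image_swap_partsGTNotRed, Set.mem_union, Set.mem_ofPred_eq, mem_partsGT_succ_iff]
  tauto

end PartsGT

section Recurrence

theorem genFun_setOf_mem_red {𝕜 : Type*} [NormedField 𝕜] (q : 𝕜) (n : ℕ) :
    genFun q {p ∈ partsGT n | n + 1 ∈ p.2} =
      q ^ (n + 1) * genFun q (partsGTNotRed (n + 1)) := by
  rw [setOf_mem_red_eq_image_insertRed,
    genFun_image_insertRed q fun p hp h => lt_irrefl _ (hp.1.2.2 _ h)]

variable {𝕜 : Type*} [NormedField 𝕜] [CompleteSpace 𝕜] {q : 𝕜}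

theorem genFun_partsGT (hq : ‖q‖ < 1) (n : ℕ) : genFun q (partsGT n) =
    genFun q (partsGTNotRed n) + q ^ (n + 1) * genFun q (partsGTNotRed (n + 1)) := by
  rw [partsGT_eq_union, genFun_union hq, genFun_setOf_mem_red]
  exact Set.disjoint_left.2 fun p hnot hmem => hnot.2 hmem.2

theorem genFun_partsGTNotRed (hq : ‖q‖ < 1) (n : ℕ) : genFun q (partsGTNotRed n) =
    genFun q (partsGT (n + 1)) + q ^ (n + 1) * genFun q (partsGTNotRed (n + 1)) := by
  rw [← genFun_image_swap, image_swap_partsGTNotRed_eq_union, genFun_union hq,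
    genFun_setOf_mem_red]
  exact Set.disjoint_left.2 fun p hgt hmem => lt_irrefl _ (hgt.2.2 _ hmem.2)

theorem genFun_partsGTNotRed_recurrence (hq : ‖q‖ < 1) (n : ℕ) : genFun q (partsGTNotRed n) =
    (1 + q ^ (n + 1)) * genFun q (partsGTNotRed (n + 1)) +
      q ^ (n + 2) * genFun q (partsGTNotRed (n + 2)) := by
  rw [genFun_partsGTNotRed hq, genFun_partsGT hq]
  ring

theorem tendsto_genFun_partsGTNotRed (hq : ‖q‖ < 1) :
    Tendsto (fun n => genFun q (partsGTNotRed n)) atTop (𝓝 1) := by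
  simpa only [iInter_partsGTNotRed, genFun_singleton_empty] using
    tendsto_genFun_iInter hq antitone_partsGTNotRed

theorem genFun_partsGTNotRed_eq_qLebesgueSeries (hq : ‖q‖ < 1) (n : ℕ) :
    genFun q (partsGTNotRed n) = qLebesgueSeries q (q ^ n) 1 := by
  have hlim : Tendsto (fun n : ℕ => qLebesgueSeries q (q ^ n) 1) atTop (𝓝 1) := by
    have hpow := tendsto_pow_atTop_nhds_zero_of_norm_lt_one hq
    simpa [qLebesgueSeries_zero_left] using tendsto_qLebesgueSeries hq hpow tendsto_const_nhds
  have hrec (n : ℕ) : qLebesgueSeries q (q ^ n) 1 = (1 + q ^ (n + 1)) *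
      qLebesgueSeries q (q ^ (n + 1)) 1 + q ^ (n + 2) * qLebesgueSeries q (q ^ (n + 2)) 1 := by
    rw [pow_succ, pow_add q n 2]
    linear_combination qLebesgueSeries_sub_mul_left hq (q ^ n) 1
  have hcoeff (k : ℕ) : Summable fun n => ‖q ^ (n + k)‖ :=
    (summable_nat_add_iff (f := fun n => ‖q ^ n‖) k).2
      (summable_norm_geometric_of_norm_lt_one hq)
  have hdiff_lim : Tendsto (fun n => genFun q (partsGTNotRed n) - qLebesgueSeries q (q ^ n) 1)
      atTop (𝓝 0) := by
    simpa using (tendsto_genFun_partsGTNotRed hq).sub hlim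
  have hdiff_rec (n : ℕ) : genFun q (partsGTNotRed n) - qLebesgueSeries q (q ^ n) 1 =
      (1 + q ^ (n + 1)) *
          (genFun q (partsGTNotRed (n + 1)) - qLebesgueSeries q (q ^ (n + 1)) 1) +
        q ^ (n + 2) * (genFun q (partsGTNotRed (n + 2)) - qLebesgueSeries q (q ^ (n + 2)) 1) := by
    linear_combination genFun_partsGTNotRed_recurrence hq n - hrec n
  exact sub_eq_zero.1 <|
    eq_zero_of_tendsto_zero_of_recurrence hdiff_rec (hcoeff 1) (hcoeff 2) hdiff_lim n

end Recurrence

theorem mem_partsGTNotRed_zero {p : Finset ℕ × Finset ℕ} :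
    p ∈ partsGTNotRed 0 ↔ TwoColoredRR p ∧ 1 ∉ p.2 :=
  ⟨fun h => ⟨h.1.1, h.2⟩, fun h => ⟨⟨h.1, h.1.1.1, h.1.2.1.1⟩, h.2⟩⟩

theorem R3count_eq_card (n : ℕ) :
    R3count n = Nat.card {p : partsGTNotRed 0 // size p.1 = n} :=
  Nat.card_congr ((Equiv.subtypeEquivRight fun p => by
    rw [← and_assoc, ← mem_partsGTNotRed_zero, size]).trans
      (Equiv.subtypeSubtypeEquivSubtypeInter (· ∈ partsGTNotRed 0) (size · = n)).symm)

end TwoColoredRR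

/-- `∑_{n≥0} R₃(n) qⁿ = (-q;q)_∞ (q;q⁴)_∞ (q³;q⁴)_∞ (q⁴;q⁴)_∞ / (q;q)_∞`. -/
theorem R3count_genfun (q : ℂ) (hq : ‖q‖ < 1) :
    ∑' n : ℕ, (R3count n : ℂ) * q ^ n =
      qPochInf (-q) q * qPochInf q (q ^ 4) * qPochInf (q ^ 3) (q ^ 4) *
        qPochInf (q ^ 4) (q ^ 4) / qPochInf q q := by
  calc ∑' n : ℕ, (R3count n : ℂ) * q ^ n
      = TwoColoredRR.genFun q (TwoColoredRR.partsGTNotRed 0) := by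
        simp only [TwoColoredRR.R3count_eq_card, TwoColoredRR.tsum_card_size_eq_mul_pow hq]
    _ = qLebesgueSeries q 1 1 := by
        simpa using TwoColoredRR.genFun_partsGTNotRed_eq_qLebesgueSeries hq 0
    _ = qPochInf (-(q ^ 2)) (q ^ 2) * qPochInf (-q) q := by
        simpa using qLebesgueSeries_one_left hq 1
    _ = qPochInf (-q) q * qPochInf q (q ^ 4) * qPochInf (q ^ 3) (q ^ 4) *
          qPochInf (q ^ 4) (q ^ 4) / qPochInf q q := by
        rw [eq_div_iff (qPochInf_self_ne_zero hq)]
        linear_combination -qPochInf (-q) q * qPochInf_mul_qPochInf_mul_qPochInf_four hq
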